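/- arXiv:2502.03919 — 9 statements merged into one kernel-verified Lean document; each statement's English description precedes it below -/
import Mathlib

section
/- Let K ⊆ ℝ^n be nonempty with K ⊆ ℝ^n_+ (every element is componentwise nonnegative), let R > 0 satisfy ‖x‖ ≤ R for all x ∈ K, let α ≥ 1, and let O : ℝ^n → ℝ^n be an α-approximation oracle for K, i.e., for every c ∈ ℝ^n_+ one has O(c) ∈ K and ⟨O(c), c⟩ ≤ α · inf_{x ∈ K} ⟨x, c⟩. Fix c ∈ ℝ^n, write c = c⁺ + c⁻ for its componentwise positive and negative parts, and for q ∈ ℝ^n let q⃗ := q/‖q‖ if q ≠ 0 and q⃗ := 0 otherwise. Define s := O(c⁺) and v := O(c⁺) − αR·(c⁻)⃗. Then: (i) ⟨v, c⟩ ≤ inf_{x ∈ αK} ⟨x, c⟩, where αK := {αx : x ∈ K}; (ii) s ≤ v componentwise; (iii) ‖v‖ ≤ (α + 2)R. -/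
/-!
Split `c = c⁺ + c⁻` with `⟪c⁻, c⁺⟫ = 0`, and let `u` be the normalized `c⁻`, so `⟪u, c⟫ = ‖c⁻‖`.
Since `O c⁺ ≥ 0` and `c⁻ ≤ 0`, `⟪v, c⟫ ≤ ⟪O c⁺, c⁺⟫ - α R ‖c⁻‖`. For `x ∈ K` the oracle guarantee
gives `⟪O c⁺, c⁺⟫ ≤ α ⟪x, c⁺⟫`, and Cauchy-Schwarz gives `-R ‖c⁻‖ ≤ ⟪x, c⁻⟫`; adding these yields
`⟪v, c⟫ ≤ ⟪α x, c⟫`. The componentwise inequality is `u ≤ 0`, and the norm bound is the triangle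
inequality with `‖u‖ ≤ 1`.
-/

open scoped RealInnerProductSpace Pointwise

/-- extended approximation oracle, case α ≥ 1. -/
theorem stmt_0 {n : ℕ} (K : Set (EuclideanSpace ℝ (Fin n))) (hKne : K.Nonempty)
    (hKpos : ∀ x ∈ K, ∀ i, 0 ≤ x i) (R : ℝ) (hR : 0 < R) (hRK : ∀ x ∈ K, ‖x‖ ≤ R)
    (α : ℝ) (hα : 1 ≤ α)
    (O : EuclideanSpace ℝ (Fin n) → EuclideanSpace ℝ (Fin n))
    (hO : ∀ c : EuclideanSpace ℝ (Fin n), (∀ i, 0 ≤ c i) →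
      O c ∈ K ∧ ⟪O c, c⟫ ≤ α * sInf ((fun x => ⟪x, c⟫) '' K))
    (c cpos cneg : EuclideanSpace ℝ (Fin n))
    (hcpos : ∀ i, cpos i = max (c i) 0)
    (hcneg : ∀ i, cneg i = min (c i) 0)
    (cnegUnit : EuclideanSpace ℝ (Fin n))
    (hcnegUnit : (cneg = 0 → cnegUnit = 0) ∧ (cneg ≠ 0 → cnegUnit = ‖cneg‖⁻¹ • cneg))
    (s v : EuclideanSpace ℝ (Fin n))
    (hs : s = O cpos)
    (hv : v = O cpos - (α * R) • cnegUnit) :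
    ⟪v, c⟫ ≤ sInf ((fun x => ⟪x, c⟫) '' (α • K)) ∧
    (∀ i, s i ≤ v i) ∧ ‖v‖ ≤ (α + 2) * R := by
  have hα0 : 0 ≤ α := by linarith
  have hcp : ∀ i, 0 ≤ cpos i := fun i => by rw [hcpos]; exact le_max_right _ _
  have hcn : ∀ i, cneg i ≤ 0 := fun i => by rw [hcneg]; exact min_le_right _ _
  obtain ⟨hOK, hOle⟩ := hO cpos hcp
  have hc : c = cpos + cneg := by
    ext i
    simp [hcpos, hcneg, max_add_min]
  have horth : ⟪cneg, cpos⟫ = 0 := by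
    rw [PiLp.inner_apply]
    refine Finset.sum_eq_zero fun i _ => ?_
    rw [hcpos, hcneg]
    rcases le_total (c i) 0 with h | h <;> simp [h]
  -- With `0⁻¹ = 0`, one formula covers both cases of the normalization.
  have hu : cnegUnit = ‖cneg‖⁻¹ • cneg := by
    by_cases h : cneg = 0
    · rw [hcnegUnit.1 h, h, smul_zero]
    · exact hcnegUnit.2 h
  have huc : ⟪cnegUnit, c⟫ = ‖cneg‖ := by
    rw [hu, hc, real_inner_smul_left, inner_add_right, horth, zero_add,
      real_inner_self_eq_norm_sq]
    by_cases h : ‖cneg‖ = 0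
    · simp [h]
    · field_simp
  have hunorm : ‖cnegUnit‖ ≤ 1 := by
    rw [hu, norm_smul, norm_inv, norm_norm]
    exact inv_mul_le_one
  have hOneg : ⟪O cpos, cneg⟫ ≤ 0 := by
    rw [PiLp.inner_apply]
    refine Finset.sum_nonpos fun i _ => ?_
    simpa using mul_nonpos_of_nonpos_of_nonneg (hcn i) (hKpos _ hOK i)
  refine ⟨?_, fun i => ?_, ?_⟩
  · refine le_csInf ((hKne.smul_set).image _) ?_
    rintro _ ⟨_, ⟨x, hx, rfl⟩, rfl⟩
    -- The infimum over `K` is genuine: `⟪·, c⁺⟫` is bounded below by `0` on `K`.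
    have hinf : sInf ((fun x => ⟪x, cpos⟫) '' K) ≤ ⟪x, cpos⟫ := by
      refine csInf_le ⟨0, ?_⟩ ⟨x, hx, rfl⟩
      rintro _ ⟨y, hy, rfl⟩
      simp only [PiLp.inner_apply]
      refine Finset.sum_nonneg fun i _ => ?_
      simpa using mul_nonneg (hcp i) (hKpos y hy i)
    have h1 : ⟪O cpos, cpos⟫ ≤ α * ⟪x, cpos⟫ :=
      hOle.trans (mul_le_mul_of_nonneg_left hinf hα0)
    have h2 : -(R * ‖cneg‖) ≤ ⟪x, cneg⟫ := by
      have h3 := (abs_le.1 (abs_real_inner_le_norm x cneg)).1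
      have h4 := mul_le_mul_of_nonneg_right (hRK x hx) (norm_nonneg cneg)
      linarith
    have h5 := mul_le_mul_of_nonneg_left h2 hα0
    have hL : ⟪v, c⟫ = ⟪O cpos, cpos⟫ + ⟪O cpos, cneg⟫ - α * R * ‖cneg‖ := by
      rw [hv, inner_sub_left, real_inner_smul_left, huc, hc, inner_add_right]
    have hRt : ⟪α • x, c⟫ = α * ⟪x, cpos⟫ + α * ⟪x, cneg⟫ := by
      rw [real_inner_smul_left, hc, inner_add_right, mul_add]
    change ⟪v, c⟫ ≤ ⟪α • x, c⟫
    rw [hL, hRt]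
    linarith
  · have h : cnegUnit i ≤ 0 := by
      rw [hu]
      simpa using mul_nonpos_of_nonneg_of_nonpos (inv_nonneg.2 (norm_nonneg cneg)) (hcn i)
    have h' := mul_nonpos_of_nonneg_of_nonpos (mul_nonneg hα0 hR.le) h
    rw [hs, hv]
    simpa using h'
  · have h1 := norm_sub_le (O cpos) ((α * R) • cnegUnit)
    have hαR := mul_nonneg hα0 hR.le
    rw [norm_smul, Real.norm_of_nonneg hαR] at h1
    have h2 := mul_le_mul_of_nonneg_left hunorm hαR
    have h3 := hRK _ hOK
    rw [hv]
    linarith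
end

section
/- Let K ⊆ ℝ^n be nonempty with K ⊆ ℝ^n_+ (every element is componentwise nonnegative), let R > 0 satisfy ‖x‖ ≤ R for all x ∈ K, let 0 < α ≤ 1, and let O : ℝ^n → ℝ^n be an α-approximation oracle for K, i.e., for every c ∈ ℝ^n_+ one has O(c) ∈ K and ⟨O(c), c⟩ ≥ α · sup_{x ∈ K} ⟨x, c⟩. Fix c ∈ ℝ^n, write c = c⁺ + c⁻ for its componentwise positive and negative parts, and for q ∈ ℝ^n let q⃗ := q/‖q‖ if q ≠ 0 and q⃗ := 0 otherwise. Define s := O(−c⁻) and v := O(−c⁻) − R·(c⁺)⃗. Then: (i) ⟨v, c⟩ ≤ inf_{x ∈ αK} ⟨x, c⟩, where αK := {αx : x ∈ K}; (ii) v ≤ s componentwise, so that v ∈ K − B₊(R) (the Minkowski difference set {u − b : u ∈ K, b ∈ B₊(R)}); (iii) ‖v‖ ≤ (α + 2)R. -/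
/-!
Write `c = c⁺ + c⁻` with `c⁺ ⟂ c⁻`, so that the unit vector `u` along `c⁺` satisfies
`⟪u, c⟫ = ‖c⁺‖` and hence `⟪v, c⟫ = ⟪s, c⁻⟫ + (⟪s, c⁺⟫ - R ‖c⁺‖)`. By Cauchy-Schwarz the
bracket is nonpositive. The oracle inequality at `-c⁻` gives `⟪s, c⁻⟫ ≤ α ⟪x, c⁻⟫` for every
`x ∈ K`, and `⟪x, c⁻⟫ ≤ ⟪x, c⟫` because `x` and `c⁺` are nonnegative; this is the bound on
the infimum. The other claims hold because `R • u` lies in `Bplus n R`; in fact `‖v‖ ≤ 2 R`.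
-/

open scoped RealInnerProductSpace Pointwise

/-- Nonnegative part of the Euclidean ball of radius `R` in `ℝ^k`. -/
def Bplus (k : ℕ) (R : ℝ) : Set (EuclideanSpace ℝ (Fin k)) :=
  {x | (∀ i, 0 ≤ x i) ∧ ‖x‖ ≤ R}

/-- extended approximation oracle, case 0 < α ≤ 1. -/
theorem stmt_1 {n : ℕ} (K : Set (EuclideanSpace ℝ (Fin n))) (hKne : K.Nonempty)
    (hKpos : ∀ x ∈ K, ∀ i, 0 ≤ x i) (R : ℝ) (hR : 0 < R) (hRK : ∀ x ∈ K, ‖x‖ ≤ R)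
    (α : ℝ) (hα0 : 0 < α) (hα1 : α ≤ 1)
    (O : EuclideanSpace ℝ (Fin n) → EuclideanSpace ℝ (Fin n))
    (hO : ∀ c : EuclideanSpace ℝ (Fin n), (∀ i, 0 ≤ c i) →
      O c ∈ K ∧ α * sSup ((fun x => ⟪x, c⟫) '' K) ≤ ⟪O c, c⟫)
    (c cpos cneg : EuclideanSpace ℝ (Fin n))
    (hcpos : ∀ i, cpos i = max (c i) 0)
    (hcneg : ∀ i, cneg i = min (c i) 0)
    (cposUnit : EuclideanSpace ℝ (Fin n))
    (hcposUnit : (cpos = 0 → cposUnit = 0) ∧ (cpos ≠ 0 → cposUnit = ‖cpos‖⁻¹ • cpos))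
    (s v : EuclideanSpace ℝ (Fin n))
    (hs : s = O (-cneg))
    (hv : v = O (-cneg) - R • cposUnit) :
    ⟪v, c⟫ ≤ sInf ((fun x => ⟪x, c⟫) '' (α • K)) ∧
    ((∀ i, v i ≤ s i) ∧ v ∈ K - Bplus n R) ∧ ‖v‖ ≤ (α + 2) * R := by
  have hc : c = cpos + cneg := by
    ext i
    simp [hcpos, hcneg, max_add_min]
  have horth : ⟪cpos, cneg⟫ = 0 := by
    rw [PiLp.inner_apply]
    refine Finset.sum_eq_zero fun i _ => ?_
    rcases le_total (c i) 0 with h | h <;> simp [hcpos, hcneg, h]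
  have hinner_nonneg : ∀ x ∈ K, 0 ≤ ⟪x, cpos⟫ := by
    intro x hx
    rw [PiLp.inner_apply]
    refine Finset.sum_nonneg fun i _ => ?_
    have h : 0 ≤ cpos i := by simp [hcpos]
    simpa using mul_nonneg h (hKpos x hx i)
  obtain ⟨hsK, hsup⟩ := hO (-cneg) (fun i => by simp [hcneg])
  rw [← hs] at hsK hsup hv
  have hu_nonneg : ∀ i, 0 ≤ cposUnit i := by
    intro i
    by_cases h : cpos = 0
    · simp [hcposUnit.1 h]
    · have h' : 0 ≤ cpos i := by simp [hcpos]
      rw [hcposUnit.2 h]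
      simpa using mul_nonneg (inv_nonneg.2 (norm_nonneg cpos)) h'
  have hu_norm : ‖cposUnit‖ ≤ 1 := by
    by_cases h : cpos = 0
    · simp [hcposUnit.1 h]
    · rw [hcposUnit.2 h, norm_smul, norm_inv, norm_norm,
        inv_mul_cancel₀ (norm_ne_zero_iff.2 h)]
  have hu_inner : ⟪cposUnit, c⟫ = ‖cpos‖ := by
    by_cases h : cpos = 0
    · simp [hcposUnit.1 h, h]
    · have h' := norm_ne_zero_iff.2 h
      rw [hcposUnit.2 h, hc, real_inner_smul_left, inner_add_right, horth,
        real_inner_self_eq_norm_sq]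
      field_simp
      ring
  have hRu : ‖R • cposUnit‖ ≤ R := by
    rw [norm_smul, Real.norm_of_nonneg hR.le]
    exact mul_le_of_le_one_right hR.le hu_norm
  refine ⟨?_, ⟨fun i => ?_, ?_⟩, ?_⟩
  · refine le_csInf ((hKne.smul_set).image _) ?_
    rintro _ ⟨_, ⟨x, hx, rfl⟩, rfl⟩
    -- Boundedness of `K` makes the real `sSup` a genuine supremum.
    have hbdd : BddAbove ((fun x => ⟪x, -cneg⟫) '' K) := by
      refine ⟨R * ‖-cneg‖, ?_⟩
      rintro _ ⟨y, hy, rfl⟩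
      exact (real_inner_le_norm y _).trans
        (mul_le_mul_of_nonneg_right (hRK y hy) (norm_nonneg _))
    have h1 : ⟪x, -cneg⟫ ≤ sSup ((fun x => ⟪x, -cneg⟫) '' K) :=
      le_csSup hbdd ⟨x, hx, rfl⟩
    have h2 := (mul_le_mul_of_nonneg_left h1 hα0.le).trans hsup
    have h3 : ⟪s, cpos⟫ ≤ R * ‖cpos‖ := (real_inner_le_norm s _).trans
      (mul_le_mul_of_nonneg_right (hRK s hsK) (norm_nonneg _))
    have h4 := mul_nonneg hα0.le (hinner_nonneg x hx)
    have h5 : ⟪v, c⟫ = ⟪s, cpos⟫ + ⟪s, cneg⟫ - R * ‖cpos‖ := by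
      rw [hv, inner_sub_left, real_inner_smul_left, hu_inner, hc, inner_add_right]
    have h6 : ⟪α • x, c⟫ = α * ⟪x, cpos⟫ + α * ⟪x, cneg⟫ := by
      rw [real_inner_smul_left, hc, inner_add_right, mul_add]
    rw [inner_neg_right, inner_neg_right] at h2
    change ⟪v, c⟫ ≤ ⟪α • x, c⟫
    rw [h5, h6]
    linarith
  · have h := mul_nonneg hR.le (hu_nonneg i)
    simp [hv, h]
  · rw [hv]
    refine Set.sub_mem_sub hsK ⟨fun i => ?_, hRu⟩
    simpa using mul_nonneg hR.le (hu_nonneg i)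
  · have h1 : ‖v‖ ≤ R + R := by
      rw [hv]
      exact (norm_sub_le _ _).trans (add_le_add (hRK s hsK) hRu)
    have h2 := mul_pos hα0 hR
    linarith
end

section
/- Let X ⊆ ℝ^n and Y ⊆ ℝ^m be nonempty compact sets, A ∈ ℝ^{n×m} a matrix, α > 0, and N ≥ 1 an integer. Write g(x, y) := xᵀ A y and αX := {αx : x ∈ X}. Let (y_i)_{i=1}^N ⊆ Y and (x_i)_{i=1}^N ⊆ ℝ^n be sequences satisfying, for every i: ⟨x_i, A y_i⟩ ≤ inf_{x ∈ αX} ⟨x, A y_i⟩. Define x̄ := (1/N) Σ_{i=1}^N x_i and the regret R_N := Σ_{i=1}^N (−g(x_i, y_i)) − inf_{y ∈ Y} Σ_{i=1}^N (−g(x_i, y)). Then sup_{y ∈ Y} g(x̄, y) ≤ inf_{x ∈ αX} sup_{y ∈ Y} g(x, y) + R_N / N. -/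
/-!
Fix `y' ∈ Y` and `x' ∈ α • X`. The oracle property gives `g (x i) (y i) ≤ g x' (y i)`, and since
`y i ∈ Y` the right side is at most `S := sup_{y ∈ Y} g x' y`; hence `∑ g (x i) (y i) ≤ N * S`.
By linearity in the first argument `∑ g (x i) y' = N * g x̄ y'`, so the regret satisfies
`R_N ≥ N * g x̄ y' - N * S`. Divide by `N` and take the supremum over `y'` and the infimum over
`x'`. Compactness enters only through the boundedness of the images, without which the real
`sSup` and `sInf` would take junk values.
-/

open scoped RealInnerProductSpace Pointwise

/-- The bilinear form `xᵀ A y` associated with a matrix `A`. -/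
def bform {n m : ℕ} (A : Matrix (Fin n) (Fin m) ℝ)
    (x : EuclideanSpace ℝ (Fin n)) (y : EuclideanSpace ℝ (Fin m)) : ℝ :=
  ∑ j, ∑ k, x j * A j k * y k

lemma bform_continuous_left {n m : ℕ} (A : Matrix (Fin n) (Fin m) ℝ)
    (y : EuclideanSpace ℝ (Fin m)) : Continuous (fun x => bform A x y) := by
  unfold bform
  fun_prop

lemma bform_continuous_right {n m : ℕ} (A : Matrix (Fin n) (Fin m) ℝ)
    (x : EuclideanSpace ℝ (Fin n)) : Continuous (fun y => bform A x y) := by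
  unfold bform
  fun_prop

lemma bform_smul_sum_left {n m N : ℕ} (A : Matrix (Fin n) (Fin m) ℝ) (c : ℝ)
    (x : Fin N → EuclideanSpace ℝ (Fin n)) (y : EuclideanSpace ℝ (Fin m)) :
    bform A (c • ∑ i, x i) y = c * ∑ i, bform A (x i) y := by
  have hadd : ∀ u v, bform A (u + v) y = bform A u y + bform A v y := fun u v => by
    simp [bform, add_mul, Finset.sum_add_distrib]
  have hsmul : ∀ (r : ℝ) u, bform A (r • u) y = r * bform A u y := fun r u => by
    simp [bform, Finset.mul_sum, mul_assoc]
  let L : EuclideanSpace ℝ (Fin n) →ₗ[ℝ] ℝ :=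
    { toFun := fun u => bform A u y, map_add' := hadd, map_smul' := hsmul }
  rw [hsmul]
  congr 1
  exact map_sum L x Finset.univ

/-- approximate infeasible saddle-point guarantee via an
(extended) approximation oracle for `X`. -/
theorem stmt_5 {n m : ℕ}
    (X : Set (EuclideanSpace ℝ (Fin n))) (hXne : X.Nonempty) (hXc : IsCompact X)
    (Y : Set (EuclideanSpace ℝ (Fin m))) (hYne : Y.Nonempty) (hYc : IsCompact Y)
    (A : Matrix (Fin n) (Fin m) ℝ) (α : ℝ) (hα : 0 < α) (N : ℕ) (hN : 1 ≤ N)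
    (y : Fin N → EuclideanSpace ℝ (Fin m)) (hy : ∀ i, y i ∈ Y)
    (x : Fin N → EuclideanSpace ℝ (Fin n))
    (hx : ∀ i, bform A (x i) (y i) ≤ sInf ((fun xx => bform A xx (y i)) '' (α • X)))
    (xbar : EuclideanSpace ℝ (Fin n)) (hxbar : xbar = (N : ℝ)⁻¹ • ∑ i, x i)
    (RN : ℝ)
    (hRN : RN = (∑ i, -(bform A (x i) (y i))) -
      sInf ((fun yy => ∑ i, -(bform A (x i) yy)) '' Y)) :
    sSup ((fun yy => bform A xbar yy) '' Y) ≤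
      sInf ((fun xx => sSup ((fun yy => bform A xx yy) '' Y)) '' (α • X)) + RN / N := by
  have hNpos : (0 : ℝ) < N := by exact_mod_cast hN
  apply csSup_le (hYne.image _)
  rintro _ ⟨y', hy', rfl⟩
  rw [← sub_le_iff_le_add]
  apply le_csInf ((hXne.smul_set (a := α)).image _)
  rintro _ ⟨x', hx', rfl⟩
  dsimp only
  have hαX : IsCompact (α • X) := hXc.smul α
  have hstep : ∀ i, bform A (x i) (y i) ≤ sSup ((fun yy => bform A x' yy) '' Y) := fun i =>
    calc bform A (x i) (y i) ≤ sInf ((fun xx => bform A xx (y i)) '' (α • X)) := hx i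
      _ ≤ bform A x' (y i) :=
        csInf_le (hαX.image (bform_continuous_left A (y i))).bddBelow ⟨x', hx', rfl⟩
      _ ≤ _ := le_csSup (hYc.image (bform_continuous_right A x')).bddAbove ⟨y i, hy i, rfl⟩
  have hsum : ∑ i, bform A (x i) (y i) ≤ N * sSup ((fun yy => bform A x' yy) '' Y) := by
    simpa using Finset.sum_le_sum fun i (_ : i ∈ Finset.univ) => hstep i
  have hcont : Continuous (fun yy => ∑ i, -(bform A (x i) yy)) :=
    continuous_finsetSum _ fun i _ => (bform_continuous_right A (x i)).neg
  have hinf : sInf ((fun yy => ∑ i, -(bform A (x i) yy)) '' Y) ≤ ∑ i, -(bform A (x i) y') :=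
    csInf_le (hYc.image hcont).bddBelow ⟨y', hy', rfl⟩
  rw [Finset.sum_neg_distrib] at hinf hRN
  have hlin : (N : ℝ) * bform A xbar y' = ∑ i, bform A (x i) y' := by
    rw [hxbar, bform_smul_sum_left, mul_inv_cancel_left₀ hNpos.ne']
  rw [sub_le_iff_le_add, ← sub_le_iff_le_add', le_div_iff₀ hNpos]
  linarith
end

section
/- Let C ⊆ ℝ^n be a nonempty set, x, ỹ, v ∈ ℝ^n, and ε ≥ 0. Suppose: (a) ⟨v, x − ỹ⟩ ≤ ⟨z, x − ỹ⟩ for every z ∈ C (v minimizes the linear function c ↦ ⟨c, x − ỹ⟩ at least as well as every point of C); and (b) ⟨x − ỹ, x − v⟩ ≤ ε. Then for every z ∈ C: ‖z − x‖² ≤ ‖z − ỹ‖² + 2ε. -/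
open scoped RealInnerProductSpace

/-- key inequality behind infeasible projections via Frank–Wolfe. -/
theorem stmt_7 {n : ℕ} (C : Set (EuclideanSpace ℝ (Fin n))) (hC : C.Nonempty)
    (x ytil v : EuclideanSpace ℝ (Fin n)) (ε : ℝ) (hε : 0 ≤ ε)
    (ha : ∀ z ∈ C, ⟪v, x - ytil⟫ ≤ ⟪z, x - ytil⟫)
    (hb : ⟪x - ytil, x - v⟫ ≤ ε) :
    ∀ z ∈ C, ‖z - x‖ ^ 2 ≤ ‖z - ytil‖ ^ 2 + 2 * ε := by
  intro z hz
  have hz' := ha z hz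
  -- Expand ‖z - ytil‖² around x; the cross term is at least ⟪v - x, x - ytil⟫ ≥ -ε.
  have key : ‖z - ytil‖ ^ 2
      = ‖z - x‖ ^ 2 + 2 * ⟪z - x, x - ytil⟫ + ‖x - ytil‖ ^ 2 := by
    rw [← norm_add_sq_real, sub_add_sub_cancel]
  rw [real_inner_comm, inner_sub_left] at hb
  rw [inner_sub_left] at key
  nlinarith [sq_nonneg ‖x - ytil‖]
end

section
/- Let x, v, ỹ ∈ ℝ^n with ‖x‖ ≤ M and ‖v‖ ≤ M for some M > 0, and let ε satisfy 0 < ε ≤ 4M². Suppose ⟨x − ỹ, x − v⟩ ≥ ε. Then there exists λ ∈ [0, 1] (in particular λ = ε / (4M²)) such that ‖(1 − λ)x + λv − ỹ‖² ≤ ‖x − ỹ‖² − ε² / (4M²). -/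
open scoped RealInnerProductSpace

/-- progress of a Frank–Wolfe step when the stopping condition fails. -/
theorem stmt_8 {n : ℕ} (x v ytil : EuclideanSpace ℝ (Fin n)) (M : ℝ) (hM : 0 < M)
    (hx : ‖x‖ ≤ M) (hv : ‖v‖ ≤ M) (ε : ℝ) (hε0 : 0 < ε) (hε1 : ε ≤ 4 * M ^ 2)
    (h : ε ≤ ⟪x - ytil, x - v⟫) :
    ∃ lam : ℝ, lam ∈ Set.Icc (0 : ℝ) 1 ∧ lam = ε / (4 * M ^ 2) ∧
      ‖(1 - lam) • x + lam • v - ytil‖ ^ 2 ≤ ‖x - ytil‖ ^ 2 - ε ^ 2 / (4 * M ^ 2) := by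
  have hM2 : 0 < 4 * M ^ 2 := by positivity
  refine ⟨ε / (4 * M ^ 2), ⟨by positivity, (div_le_one hM2).2 hε1⟩, rfl, ?_⟩
  set lam := ε / (4 * M ^ 2) with hlam
  have hlam0 : 0 ≤ lam := by positivity
  have hmul : lam * (4 * M ^ 2) = ε := div_mul_cancel₀ ε hM2.ne'
  have hdiam : ‖x - v‖ ^ 2 ≤ 4 * M ^ 2 := by
    have h1 : ‖x - v‖ ≤ 2 * M := by linarith [norm_sub_le x v]
    nlinarith [norm_nonneg (x - v)]
  have hvec : (1 - lam) • x + lam • v - ytil = (x - ytil) - lam • (x - v) := by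
    module
  have hgain : ε ^ 2 / (4 * M ^ 2) = lam * ε := by
    rw [hlam]; ring
  rw [hvec, norm_sub_sq_real, inner_smul_right, norm_smul, mul_pow, Real.norm_eq_abs,
    sq_abs, hgain]
  -- `lam` minimizes `-2 * lam * ε + lam ^ 2 * (4 * M ^ 2)`, with minimum value `-lam * ε`.
  have hlin : lam * ε ≤ lam * ⟪x - ytil, x - v⟫ := mul_le_mul_of_nonneg_left h hlam0
  have hquad : lam ^ 2 * ‖x - v‖ ^ 2 ≤ lam * ε := by
    calc lam ^ 2 * ‖x - v‖ ^ 2 ≤ lam ^ 2 * (4 * M ^ 2) := by gcongr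
      _ = lam * ε := by rw [← hmul]; ring
  linarith
end

section
/- Let C ⊆ ℝ^n_+ be a nonempty set and ρ > 0 with ‖z‖ ≤ ρ for all z ∈ C. Let μ > 0, ξ ≥ 0, N ≥ 1 an integer, and let (c_t)_{t=1}^N ⊆ ℝ^n and (x_t)_{t=1}^{N+1} ⊆ ℝ^n be sequences with x_1 ∈ C, satisfying, for every t ∈ {1,…,N} and every z ∈ C, the approximate projection property ‖x_{t+1} − z‖² ≤ ‖(x_t − μ c_t) − z‖² + 2ξ. Then for every x ∈ C: Σ_{t=1}^N ⟨x_t − x, c_t⟩ ≤ ρ²/μ + (μ/2) Σ_{t=1}^N ‖c_t‖² + ξN/μ. -/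
/-!
Expanding the square in the approximate projection property at `z = x` gives
`2μ⟪x_t - x, c_t⟫ ≤ ‖x_t - x‖² - ‖x_{t+1} - x‖² + μ²‖c_t‖² + 2ξ`. Summed over `t`, the distances
telescope to at most `‖x_1 - x‖²`. Since `x_1` and `x` both lie in the nonnegative orthant,
`⟪x_1, x⟫ ≥ 0`, so `‖x_1 - x‖² ≤ ‖x_1‖² + ‖x‖² ≤ 2ρ²`; dividing by `2μ` gives the bound.
-/

open scoped RealInnerProductSpace

/-- regret bound for online gradient descent with approximate
(infeasible) projections. -/
theorem stmt_9 {n : ℕ} (C : Set (EuclideanSpace ℝ (Fin n))) (hCne : C.Nonempty)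
    (hCpos : ∀ z ∈ C, ∀ i, 0 ≤ z i)
    (ρ : ℝ) (hρ : 0 < ρ) (hCb : ∀ z ∈ C, ‖z‖ ≤ ρ)
    (μ : ℝ) (hμ : 0 < μ) (ξ : ℝ) (hξ : 0 ≤ ξ) (N : ℕ) (hN : 1 ≤ N)
    (c : Fin N → EuclideanSpace ℝ (Fin n))
    (x : Fin (N + 1) → EuclideanSpace ℝ (Fin n)) (hx1 : x 0 ∈ C)
    (hproj : ∀ t : Fin N, ∀ z ∈ C,
      ‖x t.succ - z‖ ^ 2 ≤ ‖(x t.castSucc - μ • c t) - z‖ ^ 2 + 2 * ξ) :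
    ∀ xx ∈ C, ∑ t : Fin N, ⟪x t.castSucc - xx, c t⟫ ≤
      ρ ^ 2 / μ + μ / 2 * ∑ t : Fin N, ‖c t‖ ^ 2 + ξ * N / μ := by
  intro xx hxx
  -- One step: expand `‖(x_t - xx) - μ c_t‖²` in the approximate projection property.
  have hstep : ∀ t : Fin N, 2 * μ * ⟪x t.castSucc - xx, c t⟫ ≤
      (‖x t.castSucc - xx‖ ^ 2 - ‖x t.succ - xx‖ ^ 2) + μ ^ 2 * ‖c t‖ ^ 2 + 2 * ξ := by
    intro t
    have h := hproj t xx hxx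
    rw [sub_right_comm, norm_sub_sq_real _ (μ • c t), inner_smul_right, norm_smul, mul_pow,
      Real.norm_eq_abs, sq_abs] at h
    linarith
  have hsum := Finset.sum_le_sum fun t (_ : t ∈ Finset.univ) => hstep t
  rw [← Finset.mul_sum, Finset.sum_add_distrib, Finset.sum_add_distrib, Finset.sum_sub_distrib,
    ← Finset.mul_sum, Finset.sum_const, Finset.card_univ, Fintype.card_fin, nsmul_eq_mul] at hsum
  -- The distances telescope: compare the two ways of splitting a sum over `Fin (N + 1)`.
  have htel := (Fin.sum_univ_castSucc fun t => ‖x t - xx‖ ^ 2).symm.trans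
    (Fin.sum_univ_succ fun t => ‖x t - xx‖ ^ 2)
  have hlast : 0 ≤ ‖x (Fin.last N) - xx‖ ^ 2 := sq_nonneg _
  have hinit : ‖x 0 - xx‖ ^ 2 ≤ 2 * ρ ^ 2 := by
    -- Nonnegativity of the coordinates makes the cross term favourable.
    have hinner : 0 ≤ ⟪x 0, xx⟫ := by
      rw [PiLp.inner_apply]
      exact Finset.sum_nonneg fun i _ => mul_nonneg (hCpos xx hxx i) (hCpos _ hx1 i)
    have h1 : ‖x 0‖ ^ 2 ≤ ρ ^ 2 := pow_le_pow_left₀ (norm_nonneg _) (hCb _ hx1) 2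
    have h2 : ‖xx‖ ^ 2 ≤ ρ ^ 2 := pow_le_pow_left₀ (norm_nonneg _) (hCb _ hxx) 2
    rw [norm_sub_sq_real]
    linarith
  have hrhs : ρ ^ 2 / μ + μ / 2 * ∑ t : Fin N, ‖c t‖ ^ 2 + ξ * N / μ =
      (2 * ρ ^ 2 + μ ^ 2 * ∑ t : Fin N, ‖c t‖ ^ 2 + N * (2 * ξ)) / (2 * μ) := by
    field_simp
  rw [hrhs, le_div_iff₀ (by positivity)]
  linarith
end

section
/- Let X ⊆ ℝ^n_+ be nonempty with ‖x‖ ≤ R_X for all x ∈ X, let Y ⊆ ℝ^m_+ be nonempty, let ℓ : ℝ^n × ℝ^m → ℝ^d be a bilinear map with ℓ(x, y) ≥ 0 componentwise for all x ∈ ℝ^n_+, y ∈ ℝ^m_+, and let S ⊆ ℝ^d be a nonempty bounded set. Define ‖ℓ‖ := sup{⟨w, ℓ(x,y)⟩ : ‖w‖ ≤ 1, ‖x‖ ≤ 1, ‖y‖ ≤ 1}. Suppose the Blackwell condition holds for (X, Y, ℓ, S): for every w in the closed Euclidean unit ball of ℝ^d there exists x ∈ X such that ⟨w, ℓ(x,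 y)⟩ ≤ h_S(w) for all y ∈ Y. Then for any R > 0, setting R̃ := ‖ℓ‖ R_X R, the Blackwell condition holds for (X, Y − B₊(R), ℓ, S − B₊(R̃)): for every w in the closed Euclidean unit ball of ℝ^d there exists x ∈ X such that ⟨w, ℓ(x, ỹ)⟩ ≤ h_{S − B₊(R̃)}(w) for all ỹ in the Minkowski difference Y − B₊(R) := {u − b : u ∈ Y, b ∈ B₊(R)}. -/
/-!
The point `x` that answers `w` in the original game also answers it in the shifted game.
For `u - b` with `u ∈ Y` and `b ∈ B₊(R)`, bilinearity gives
`⟪w, ℓ x (u - b)⟫ = ⟪w, ℓ x u⟫ - ⟪w, ℓ x b⟫ ≤ h_S(w) - ⟪ℓ x b, w⟫`. The vector `ℓ x b` is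
nonnegative, and its norm is at most `‖ℓ‖ ‖x‖ ‖b‖ ≤ R̃` (`norm_apply_le_of_eq_sSup`), so it lies in
`B₊(R̃)`; hence the right-hand side, a supremum of `⟪s - ℓ x b, w⟫` over `s ∈ S`, is at most
`h_{S - B₊(R̃)}(w)`.
-/

open scoped RealInnerProductSpace Pointwise

/-- Support function of a set. -/
noncomputable def suppF {d : ℕ} (K : Set (EuclideanSpace ℝ (Fin d)))
    (w : EuclideanSpace ℝ (Fin d)) : ℝ :=
  sSup ((fun k => ⟪k, w⟫) '' K)

/-- The values whose supremum defines `‖ℓ‖` are bounded above, since a bilinear map between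
finite-dimensional spaces is continuous. -/
lemma bddAbove_bilin_values {n m d : ℕ}
    (ℓ : EuclideanSpace ℝ (Fin n) →ₗ[ℝ] EuclideanSpace ℝ (Fin m) →ₗ[ℝ] EuclideanSpace ℝ (Fin d)) :
    BddAbove {r : ℝ | ∃ w : EuclideanSpace ℝ (Fin d),
      ∃ x : EuclideanSpace ℝ (Fin n), ∃ y : EuclideanSpace ℝ (Fin m),
      ‖w‖ ≤ 1 ∧ ‖x‖ ≤ 1 ∧ ‖y‖ ≤ 1 ∧ r = ⟪w, ℓ x y⟫} := by
  let L := LinearMap.toContinuousLinearMap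
    ((LinearMap.toContinuousLinearMap (𝕜 := ℝ) (E := EuclideanSpace ℝ (Fin m))
      (F' := EuclideanSpace ℝ (Fin d))).toLinearMap ∘ₗ ℓ)
  have hL : ∀ x y, ℓ x y = L x y := fun x y => rfl
  refine ⟨‖L‖, ?_⟩
  rintro r ⟨w, x, y, hw, hx, hy, rfl⟩
  calc ⟪w, ℓ x y⟫ ≤ ‖w‖ * ‖ℓ x y‖ := real_inner_le_norm _ _
    _ ≤ 1 * ‖ℓ x y‖ := by gcongr
    _ = ‖L x y‖ := by rw [one_mul, hL]
    _ ≤ ‖L‖ * ‖x‖ * ‖y‖ := L.le_opNorm₂ x y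
    _ ≤ ‖L‖ * 1 * 1 := by gcongr
    _ = ‖L‖ := by ring

/-- The supremum defining `‖ℓ‖` is nonnegative, and it bounds `ℓ` as an operator norm does. -/
lemma norm_apply_le_of_eq_sSup {n m d : ℕ}
    (ℓ : EuclideanSpace ℝ (Fin n) →ₗ[ℝ] EuclideanSpace ℝ (Fin m) →ₗ[ℝ] EuclideanSpace ℝ (Fin d))
    (normL : ℝ)
    (hnormL : normL = sSup {r : ℝ | ∃ w : EuclideanSpace ℝ (Fin d),
      ∃ x : EuclideanSpace ℝ (Fin n), ∃ y : EuclideanSpace ℝ (Fin m),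
      ‖w‖ ≤ 1 ∧ ‖x‖ ≤ 1 ∧ ‖y‖ ≤ 1 ∧ r = ⟪w, ℓ x y⟫}) :
    0 ≤ normL ∧ ∀ x y, ‖ℓ x y‖ ≤ normL * ‖x‖ * ‖y‖ := by
  have hle : ∀ w x y, ‖w‖ ≤ 1 → ‖x‖ ≤ 1 → ‖y‖ ≤ 1 → ⟪w, ℓ x y⟫ ≤ normL := by
    intro w x y hw hx hy
    rw [hnormL]
    exact le_csSup (bddAbove_bilin_values ℓ) ⟨w, x, y, hw, hx, hy, rfl⟩
  have h0 : 0 ≤ normL := by simpa using hle 0 0 0 (by simp) (by simp) (by simp)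
  refine ⟨h0, fun x y => ?_⟩
  by_cases hc : ℓ x y = 0
  · rw [hc, norm_zero]
    positivity
  have hx : x ≠ 0 := by rintro rfl; simp at hc
  have hy : y ≠ 0 := by rintro rfl; simp at hc
  have hunit : ∀ {k : ℕ} (v : EuclideanSpace ℝ (Fin k)), v ≠ 0 → ‖‖v‖⁻¹ • v‖ ≤ 1 :=
    fun v hv => by rw [norm_smul, norm_inv, norm_norm, inv_mul_cancel₀ (norm_ne_zero_iff.2 hv)]
  -- Normalizing all three arguments attains the ratio `‖ℓ x y‖ / (‖x‖ ‖y‖)`.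
  have h := hle _ _ _ (hunit _ hc) (hunit x hx) (hunit y hy)
  simp only [map_smul, LinearMap.smul_apply, real_inner_smul_left, real_inner_smul_right,
    real_inner_self_eq_norm_sq] at h
  have hx' := norm_pos_iff.2 hx
  have hy' := norm_pos_iff.2 hy
  have hc' := norm_pos_iff.2 hc
  have e : ‖ℓ x y‖ = (‖ℓ x y‖⁻¹ * (‖y‖⁻¹ * (‖x‖⁻¹ * ‖ℓ x y‖ ^ 2))) * ‖x‖ * ‖y‖ := by
    field_simp
  rw [e]
  gcongr
  linarith

/-- If `b ∈ B₊(ρ)`, then `h_S(w) - ⟪w, b⟫ ≤ h_{S - B₊(ρ)}(w)`; boundedness of `S` keeps the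
right-hand supremum finite. -/
lemma suppF_sub_inner_le {d : ℕ} {S : Set (EuclideanSpace ℝ (Fin d))} (hSne : S.Nonempty)
    (hSb : Bornology.IsBounded S) {ρ : ℝ} {b : EuclideanSpace ℝ (Fin d)} (hb : b ∈ Bplus d ρ)
    (w : EuclideanSpace ℝ (Fin d)) :
    suppF S w - ⟪w, b⟫ ≤ suppF (S - Bplus d ρ) w := by
  obtain ⟨C, hC⟩ := hSb.exists_norm_le
  have hbdd : BddAbove ((fun k => ⟪k, w⟫) '' (S - Bplus d ρ)) := by
    refine ⟨(C + ρ) * ‖w‖, ?_⟩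
    rintro _ ⟨_, ⟨s, hs, c, hc, rfl⟩, rfl⟩
    refine (real_inner_le_norm _ _).trans ?_
    gcongr
    exact (norm_sub_le s c).trans (add_le_add (hC s hs) hc.2)
  rw [sub_le_iff_le_add]
  refine csSup_le (hSne.image _) ?_
  rintro _ ⟨s, hs, rfl⟩
  have h : ⟪s - b, w⟫ ≤ suppF (S - Bplus d ρ) w :=
    le_csSup hbdd ⟨s - b, Set.sub_mem_sub hs hb, rfl⟩
  rw [inner_sub_left, real_inner_comm w b] at h
  change ⟪s, w⟫ ≤ _
  linarith

/-- the Blackwell condition is preserved when shifting the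
adversary's set and the target set by nonnegative balls. -/
theorem stmt_11 {n m d : ℕ}
    (X : Set (EuclideanSpace ℝ (Fin n))) (hXne : X.Nonempty)
    (hXpos : ∀ x ∈ X, ∀ i, 0 ≤ x i)
    (RX : ℝ) (hRX : ∀ x ∈ X, ‖x‖ ≤ RX)
    (Y : Set (EuclideanSpace ℝ (Fin m))) (hYne : Y.Nonempty)
    (hYpos : ∀ y ∈ Y, ∀ j, 0 ≤ y j)
    (ℓ : EuclideanSpace ℝ (Fin n) →ₗ[ℝ] EuclideanSpace ℝ (Fin m) →ₗ[ℝ] EuclideanSpace ℝ (Fin d))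
    (hℓpos : ∀ x : EuclideanSpace ℝ (Fin n), (∀ i, 0 ≤ x i) →
      ∀ y : EuclideanSpace ℝ (Fin m), (∀ j, 0 ≤ y j) → ∀ k, 0 ≤ (ℓ x y) k)
    (S : Set (EuclideanSpace ℝ (Fin d))) (hSne : S.Nonempty) (hSb : Bornology.IsBounded S)
    (normL : ℝ)
    (hnormL : normL = sSup {r : ℝ | ∃ w : EuclideanSpace ℝ (Fin d),
      ∃ x : EuclideanSpace ℝ (Fin n), ∃ y : EuclideanSpace ℝ (Fin m),
      ‖w‖ ≤ 1 ∧ ‖x‖ ≤ 1 ∧ ‖y‖ ≤ 1 ∧ r = ⟪w, ℓ x y⟫})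
    (hB : ∀ w : EuclideanSpace ℝ (Fin d), ‖w‖ ≤ 1 →
      ∃ x ∈ X, ∀ y ∈ Y, ⟪w, ℓ x y⟫ ≤ suppF S w)
    (R : ℝ) (hR : 0 < R) (Rtil : ℝ) (hRtil : Rtil = normL * RX * R) :
    ∀ w : EuclideanSpace ℝ (Fin d), ‖w‖ ≤ 1 →
      ∃ x ∈ X, ∀ yt ∈ Y - Bplus m R, ⟪w, ℓ x yt⟫ ≤ suppF (S - Bplus d Rtil) w := by
  intro w hw
  obtain ⟨x, hx, hxy⟩ := hB w hw
  refine ⟨x, hx, ?_⟩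
  rintro _ ⟨u, hu, b, hb, rfl⟩
  obtain ⟨h0, hnorm⟩ := norm_apply_le_of_eq_sSup ℓ normL hnormL
  have hmem : ℓ x b ∈ Bplus d Rtil := by
    refine ⟨hℓpos x (hXpos x hx) b hb.1, ?_⟩
    have hRX0 : 0 ≤ RX := (norm_nonneg x).trans (hRX x hx)
    rw [hRtil]
    refine (hnorm x b).trans ?_
    gcongr
    · exact hRX x hx
    · exact hb.2
  have h1 := suppF_sub_inner_le hSne hSb hmem w
  have h2 := hxy u hu
  change ⟪w, ℓ x (u - b)⟫ ≤ _
  rw [map_sub, inner_sub_right]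
  linarith
end

section
/- For any R > 0 and any w ∈ ℝ^d: sup_{b ∈ B₊(R)} ⟨w, −b⟩ = R ‖w⁻‖, where w⁻ denotes the componentwise minimum of w with 0. Consequently, for any nonempty bounded set S ⊆ ℝ^d, the support function of the Minkowski difference S − B₊(R) := {s − b : s ∈ S, b ∈ B₊(R)} satisfies h_{S − B₊(R)}(w) = h_S(w) + R ‖w⁻‖. -/
/-!
Since `w ≥ w⁻` componentwise, `⟪w, -b⟫ ≤ ⟪w⁻, -b⟫ ≤ R ‖w⁻‖` for `b ∈ B₊(R)` by Cauchy–Schwarz.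
Equality holds at `b = -(R / ‖w⁻‖) w⁻`, because `⟪w, w⁻⟫ = ‖w⁻‖²` (take
`b = 0` if `w⁻ = 0`); so the supremum is attained (`isGreatest_inner_neg_Bplus`).
The support function of a Minkowski difference is then the sum of
the two suprema, by additivity of `sSup` on nonempty sets bounded above.
-/

open scoped RealInnerProductSpace Pointwise

/-- The maximum is attained at `-(R / ‖w⁻‖) w⁻`, which is `0` when `w⁻ = 0` since `R / 0 = 0`. -/
theorem isGreatest_inner_neg_Bplus {d : ℕ} {R : ℝ} (hR : 0 < R)
    {w wneg : EuclideanSpace ℝ (Fin d)} (hwneg : ∀ i, wneg i = min (w i) 0) :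
    IsGreatest ((fun b => ⟪w, -b⟫) '' Bplus d R) (R * ‖wneg‖) := by
  constructor
  · refine ⟨-((R / ‖wneg‖) • wneg), ⟨fun i => ?_, ?_⟩, ?_⟩
    · have h1 : wneg i ≤ 0 := by rw [hwneg]; exact min_le_right _ _
      have h2 : 0 ≤ R / ‖wneg‖ := by positivity
      simp only [PiLp.neg_apply, PiLp.smul_apply, smul_eq_mul]
      nlinarith
    · rw [norm_neg, norm_smul, Real.norm_of_nonneg (by positivity)]
      rcases eq_or_ne ‖wneg‖ 0 with h0 | h0
      · simpa [h0] using hR.le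
      · rw [div_mul_cancel₀ _ h0]
    · have h : ⟪w, wneg⟫ = ‖wneg‖ ^ 2 := by
        rw [← real_inner_self_eq_norm_sq]
        simp only [PiLp.inner_apply]
        refine Finset.sum_congr rfl fun i _ => ?_
        rcases min_choice (w i) 0 with h | h <;> simp [hwneg, h]
      simp only [neg_neg, inner_smul_right, h]
      rcases eq_or_ne ‖wneg‖ 0 with h0 | h0
      · simp [h0]
      · field_simp
  · rintro _ ⟨b, ⟨hb0, hbR⟩, rfl⟩
    calc ⟪w, -b⟫ ≤ ⟪wneg, -b⟫ := by
          simp only [PiLp.inner_apply]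
          refine Finset.sum_le_sum fun i _ => ?_
          have h1 : wneg i ≤ w i := by rw [hwneg]; exact min_le_left _ _
          have h2 := hb0 i
          simp only [PiLp.neg_apply, RCLike.inner_apply, conj_trivial]
          nlinarith
      _ ≤ ‖wneg‖ * ‖-b‖ := real_inner_le_norm _ _
      _ ≤ R * ‖wneg‖ := by
          rw [norm_neg, mul_comm]
          gcongr

/-- support function of the shifted set `S − B₊(R)`. -/
theorem stmt_12 {d : ℕ} (R : ℝ) (hR : 0 < R) (w : EuclideanSpace ℝ (Fin d))
    (wneg : EuclideanSpace ℝ (Fin d)) (hwneg : ∀ i, wneg i = min (w i) 0) :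
    sSup ((fun b => ⟪w, -b⟫) '' Bplus d R) = R * ‖wneg‖ ∧
    ∀ S : Set (EuclideanSpace ℝ (Fin d)), S.Nonempty → Bornology.IsBounded S →
      suppF (S - Bplus d R) w = suppF S w + R * ‖wneg‖ := by
  have hG := isGreatest_inner_neg_Bplus hR hwneg
  refine ⟨hG.csSup_eq, fun S hS hb => ?_⟩
  have himg : (fun k => ⟪k, w⟫) '' (S - Bplus d R)
      = (fun k => ⟪k, w⟫) '' S + (fun b => ⟪w, -b⟫) '' Bplus d R := by
    rw [← Set.image2_sub, ← Set.image2_add, Set.image_image2, Set.image2_image_left,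
      Set.image2_image_right]
    refine Set.image2_congr fun s _ b _ => ?_
    rw [inner_sub_left, inner_neg_right, real_inner_comm w b, sub_eq_add_neg]
  have hbdd : BddAbove ((fun k => ⟪k, w⟫) '' S) := by
    obtain ⟨C, hC⟩ := hb.exists_norm_le
    refine ⟨C * ‖w‖, ?_⟩
    rintro _ ⟨s, hs, rfl⟩
    exact (real_inner_le_norm s w).trans
      (mul_le_mul_of_nonneg_right (hC s hs) (norm_nonneg w))
  unfold suppF
  rw [himg, csSup_add (hS.image _) hbdd hG.nonempty hG.bddAbove, hG.csSup_eq]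
end

section
/- Let X ⊆ ℝ^n_+ be a nonempty compact set, Y ⊆ ℝ^m_+ a nonempty compact set with ‖y‖ ≤ R_Y for all y ∈ Y, let α_X ≥ 1, 0 < α_Y ≤ 1, A ∈ ℝ^{n×m} a matrix, and N ≥ 1 an integer. Write g(x, y) := xᵀ A y. Let (x_i)_{i=1}^N ⊆ ℝ^n and (y_i)_{i=1}^N ⊆ ℝ^m be sequences such that: (a) for every i, g(x_i, y_i) ≥ sup_{y ∈ α_Y Y} g(x_i, y), where α_Y Y := {α_Y y : y ∈ Y}; and (b) ȳ := (1/N) Σ_{i=1}^N y_i belongs to the Minkowski difference Y − B₊(R_Y) := {u − b : u ∈ Y, b ∈ B₊(R_Y)}. Define x̄ := (1/N) Σ_{i=1}^N x_i and the regret R_N := Σ_{i=1}^N g(x_i, y_i) − inf_{x ∈ α_X X} Σ_{i=1}^N g(x, y_i), where α_X X := {α_X x : x ∈ X}. Then sup_{y ∈ Y} g(x̄, y) ≤ inf_{x ∈ α_X X} sup_{y ∈ α_Y^{-1}(Y − B₊(R_Y))} g(x, y) + R_N / (α_Y N), where α_Y^{-1}(Y − B₊(R_Y)) := {α_Y^{-1}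 z : z ∈ Y − B₊(R_Y)}. -/
/-!
The argument is the standard passage from regret to a saddle-point bound. For `v ∈ Y`, the oracle
inequality at `αY • v` gives `αY * g(x i, v) ≤ g(x i, y i)` for every `i`; averaging over `i` and
using the definition of the regret, `αY * N * g(x̄, v) ≤ RN + ∑ i, g(u, y i)` for every `u ∈ αX • X`.
By linearity `∑ i, g(u, y i) = αY * N * g(u, αY⁻¹ • ȳ)`, and `αY⁻¹ • ȳ` is one of the points over
which the inner supremum on the right is taken. The suprema over `αY • Y` and over
`αY⁻¹ • (Y - Bplus m RY)`, and the infimum in the regret, are those of continuous functions on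
compact sets, so the boundedness needed to compare them with individual values is automatic; the
remaining `sSup` and `sInf` are bounded termwise, for which nonemptiness suffices.
-/

open scoped RealInnerProductSpace Pointwise

lemma bform_smul_right {n m : ℕ} (A : Matrix (Fin n) (Fin m) ℝ) (c : ℝ)
    (x : EuclideanSpace ℝ (Fin n)) (y : EuclideanSpace ℝ (Fin m)) :
    bform A x (c • y) = c * bform A x y := by
  simp only [bform, PiLp.smul_apply, smul_eq_mul, Finset.mul_sum]
  exact Finset.sum_congr rfl fun j _ => Finset.sum_congr rfl fun k _ => by ring

lemma bform_smul_left {n m : ℕ} (A : Matrix (Fin n) (Fin m) ℝ) (c : ℝ)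
    (x : EuclideanSpace ℝ (Fin n)) (y : EuclideanSpace ℝ (Fin m)) :
    bform A (c • x) y = c * bform A x y := by
  simp only [bform, PiLp.smul_apply, smul_eq_mul, Finset.mul_sum]
  exact Finset.sum_congr rfl fun j _ => Finset.sum_congr rfl fun k _ => by ring

lemma bform_sum_right {n m N : ℕ} (A : Matrix (Fin n) (Fin m) ℝ)
    (x : EuclideanSpace ℝ (Fin n)) (y : Fin N → EuclideanSpace ℝ (Fin m)) :
    bform A x (∑ i, y i) = ∑ i, bform A x (y i) := by
  simp only [bform, WithLp.ofLp_sum, Finset.sum_apply, Finset.mul_sum]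
  rw [Finset.sum_comm]
  simp_rw [Finset.sum_comm (s := (Finset.univ : Finset (Fin n)))]
  rw [Finset.sum_comm]

lemma bform_sum_left {n m N : ℕ} (A : Matrix (Fin n) (Fin m) ℝ)
    (x : Fin N → EuclideanSpace ℝ (Fin n)) (y : EuclideanSpace ℝ (Fin m)) :
    bform A (∑ i, x i) y = ∑ i, bform A (x i) y := by
  simp only [bform, WithLp.ofLp_sum, Finset.sum_apply, Finset.sum_mul]
  rw [Finset.sum_comm]
  simp_rw [Finset.sum_comm (s := (Finset.univ : Finset (Fin n)))]
  rw [Finset.sum_comm]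

lemma isCompact_Bplus (k : ℕ) (R : ℝ) : IsCompact (Bplus k R) := by
  refine (isCompact_closedBall (0 : EuclideanSpace ℝ (Fin k)) R).of_isClosed_subset ?_ ?_
  · have h : Bplus k R = (⋂ i, {x | 0 ≤ x i}) ∩ {x | ‖x‖ ≤ R} := by
      ext x; simp [Bplus]
    rw [h]
    exact (isClosed_iInter fun i => isClosed_le (by fun_prop) (by fun_prop)).inter
      (isClosed_le (by fun_prop) (by fun_prop))
  · intro x hx
    simpa using hx.2

/-- approximate infeasible saddle-point guarantee via approximation
oracles for both `X` and `Y`. -/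
theorem stmt_18 {n m : ℕ}
    (X : Set (EuclideanSpace ℝ (Fin n))) (hXne : X.Nonempty) (hXc : IsCompact X)
    (hXpos : ∀ x ∈ X, ∀ i, 0 ≤ x i)
    (Y : Set (EuclideanSpace ℝ (Fin m))) (hYne : Y.Nonempty) (hYc : IsCompact Y)
    (hYpos : ∀ y ∈ Y, ∀ j, 0 ≤ y j)
    (RY : ℝ) (hRY0 : 0 < RY) (hRYb : ∀ y ∈ Y, ‖y‖ ≤ RY)
    (αX αY : ℝ) (hαX : 1 ≤ αX) (hαY0 : 0 < αY) (hαY1 : αY ≤ 1)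
    (A : Matrix (Fin n) (Fin m) ℝ) (N : ℕ) (hN : 1 ≤ N)
    (x : Fin N → EuclideanSpace ℝ (Fin n))
    (y : Fin N → EuclideanSpace ℝ (Fin m))
    (ha : ∀ i, sSup ((fun yy => bform A (x i) yy) '' (αY • Y)) ≤ bform A (x i) (y i))
    (hb : (N : ℝ)⁻¹ • ∑ i, y i ∈ Y - Bplus m RY)
    (xbar : EuclideanSpace ℝ (Fin n)) (hxbar : xbar = (N : ℝ)⁻¹ • ∑ i, x i)
    (RN : ℝ)
    (hRN : RN = (∑ i, bform A (x i) (y i)) -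
      sInf ((fun xx => ∑ i, bform A xx (y i)) '' (αX • X))) :
    sSup ((fun yy => bform A xbar yy) '' Y) ≤
      sInf ((fun xx => sSup ((fun yy => bform A xx yy) '' (αY⁻¹ • (Y - Bplus m RY)))) ''
        (αX • X)) + RN / (αY * N) := by
  have hN0 : (0 : ℝ) < N := by exact_mod_cast hN
  have hc : 0 < αY * N := mul_pos hαY0 hN0
  refine csSup_le (hYne.image _) ?_
  rintro _ ⟨v, hv, rfl⟩
  rw [← sub_le_iff_le_add]
  refine le_csInf ((hXne.smul_set).image _) ?_
  rintro _ ⟨u, hu, rfl⟩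
  rw [sub_le_iff_le_add]
  have oracle : ∀ i, αY * bform A (x i) v ≤ bform A (x i) (y i) := fun i => by
    rw [← bform_smul_right]
    exact (le_csSup ((hYc.smul αY).image (bform_continuous_right A (x i))).bddAbove
      ⟨_, Set.smul_mem_smul_set hv, rfl⟩).trans (ha i)
  have regret : ∑ i, bform A (x i) (y i) - RN ≤ ∑ i, bform A u (y i) := by
    rw [hRN, sub_sub_cancel]
    exact csInf_le ((hXc.smul αX).image
      (continuous_finsetSum _ fun i _ => bform_continuous_left A (y i))).bddBelow ⟨u, hu, rfl⟩
  have inner_sup : αY⁻¹ * ((N : ℝ)⁻¹ * ∑ i, bform A u (y i)) ≤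
      sSup ((fun yy => bform A u yy) '' (αY⁻¹ • (Y - Bplus m RY))) := by
    rw [← bform_sum_right, ← bform_smul_right, ← bform_smul_right]
    have hcomp : IsCompact (Y - Bplus m RY) := by
      rw [sub_eq_add_neg]
      exact hYc.add (isCompact_Bplus m RY).neg
    exact le_csSup ((hcomp.smul αY⁻¹).image
      (bform_continuous_right A u)).bddAbove ⟨_, Set.smul_mem_smul_set hb, rfl⟩
  have average : αY * ∑ i, bform A (x i) v ≤ ∑ i, bform A (x i) (y i) := by
    rw [Finset.mul_sum]
    exact Finset.sum_le_sum fun i _ => oracle i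
  have total : αY * ∑ i, bform A (x i) v ≤ ∑ i, bform A u (y i) + RN := by linarith
  calc bform A xbar v = (αY * ∑ i, bform A (x i) v) / (αY * N) := by
        rw [hxbar, bform_smul_left, bform_sum_left]
        field_simp
    _ ≤ (∑ i, bform A u (y i) + RN) / (αY * N) := by gcongr
    _ = αY⁻¹ * ((N : ℝ)⁻¹ * ∑ i, bform A u (y i)) + RN / (αY * N) := by field_simp
    _ ≤ _ := by gcongr
end
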